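/- The shape of a region quadtree is independent of the order of insertions: if l₁ and l₂ are duplicate-free lists of points of a half-open square R of side w > 0 such that l₂ is a permutation of l₁, then folding insert over l₁ starting from Empty yields the same tree as folding insert over l₂ starting from Empty. -/

import Mathlib

/-- The four quadrant directions. -/
inductive Dir : Type
  | nw | ne | sw | se
  deriving DecidableEq

noncomputable section

/-- A half-open square `[x, x+w) × [y, y+w)` given by its corner `(x, y)` and side `w`. -/
structure Sq where
  x : ℝ
  y : ℝ
  w : ℝ

/-- The set of points of a half-open square. -/
def Sq.set (R : Sq) : Set (ℝ × ℝ) :=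
  {p : ℝ × ℝ | R.x ≤ p.1 ∧ p.1 < R.x + R.w ∧ R.y ≤ p.2 ∧ p.2 < R.y + R.w}

/-- The quadrant of a square in a given direction: a half-open square of side `w/2`. -/
def Sq.quad (R : Sq) : Dir → Sq
  | .nw => ⟨R.x, R.y, R.w / 2⟩
  | .ne => ⟨R.x + R.w / 2, R.y, R.w / 2⟩
  | .sw => ⟨R.x, R.y + R.w / 2, R.w / 2⟩
  | .se => ⟨R.x + R.w / 2, R.y + R.w / 2, R.w / 2⟩

/-- The direction (routing quadrant) of a point `p` in the square `R`. -/
def Sq.dirOf (R : Sq) (p : ℝ × ℝ) : Dir :=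
  if p.1 < R.x + R.w / 2 then
    if p.2 < R.y + R.w / 2 then .nw else .sw
  else
    if p.2 < R.y + R.w / 2 then .ne else .se

/-- The square reached after `d` routing steps for the point `p`, starting from the root
square `R` (so `routeSq R p 0 = R`). -/
def routeSq (R : Sq) (p : ℝ × ℝ) : ℕ → Sq
  | 0 => R
  | n + 1 => (routeSq R p n).quad ((routeSq R p n).dirOf p)

/-- The `n`-th element of the routing sequence of `p`, i.e. the direction taken at step `n`. -/
def routeDir (R : Sq) (p : ℝ × ℝ) (n : ℕ) : Dir :=
  (routeSq R p n).dirOf p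

/-- A region quadtree: `empty`, a `leaf` storing a key, or an `internal` node with four
children (nw, ne, sw, se). -/
inductive QTree : Type
  | empty : QTree
  | leaf (p : ℝ × ℝ) : QTree
  | internal (nw ne sw se : QTree) : QTree
  deriving DecidableEq

/-- The child of a tree in a given direction (for internal nodes). -/
def QTree.child : QTree → Dir → QTree
  | .internal a _ _ _, .nw => a
  | .internal _ b _ _, .ne => b
  | .internal _ _ c _, .sw => c
  | .internal _ _ _ e, .se => e
  | _, _ => .empty

/-- The set of keys appearing in the leaf nodes of a quadtree. -/
def QTree.keys : QTree → Set (ℝ × ℝ)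
  | .empty => ∅
  | .leaf p => {p}
  | .internal a b c e => a.keys ∪ b.keys ∪ c.keys ∪ e.keys

/-- `WF t R`: the tree `t` is well-formed for the half-open square `R`: an `empty` tree is
well-formed; a leaf is well-formed if its key lies in `R`; an internal node is well-formed if
each child is well-formed for the corresponding quadrant of `R`. -/
inductive WF : QTree → Sq → Prop
  | empty (R : Sq) : WF .empty R
  | leaf (p : ℝ × ℝ) (R : Sq) (hp : p ∈ R.set) : WF (.leaf p) R
  | internal (a b c e : QTree) (R : Sq)
      (ha : WF a (R.quad .nw)) (hb : WF b (R.quad .ne))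
      (hc : WF c (R.quad .sw)) (he : WF e (R.quad .se)) :
      WF (.internal a b c e) R

/-- The internal node whose child in direction `d` is `f d`. -/
def mkNode (f : Dir → QTree) : QTree :=
  .internal (f .nw) (f .ne) (f .sw) (f .se)

/-- Fuelled version of `split`: given fuel `n + 1`, if `p` and `q` lie in different quadrants
of `R`, return the internal node with `leaf p` and `leaf q` in their respective quadrants and
`empty` elsewhere; otherwise recurse (with fuel `n`) into the common quadrant containing `p`
and `q`, placing `empty` elsewhere. -/
def splitFuel : ℕ → ℝ × ℝ → ℝ × ℝ → Sq → QTree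
  | 0, _, _, _ => .empty
  | n + 1, p, q, R =>
    if R.dirOf p = R.dirOf q then
      mkNode fun d => if d = R.dirOf p then splitFuel n p q (R.quad (R.dirOf p)) else .empty
    else
      mkNode fun d =>
        if d = R.dirOf p then .leaf p else if d = R.dirOf q then .leaf q else .empty

open Classical in
/-- Enough fuel for the recursion defining `split p q R`: one more than the first depth
(along the routing path of `p`) at which `p` and `q` take different directions. -/
def splitDepth (p q : ℝ × ℝ) (R : Sq) : ℕ :=
  if h : ∃ n : ℕ, (routeSq R p n).dirOf p ≠ (routeSq R p n).dirOf q then Nat.find h + 1 else 0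

/-- `split p q R`, the region quadtree containing exactly the two distinct keys `p, q ∈ R`,
defined by the recursion described above (realized via the fuelled function with enough
fuel for the recursion to have terminated). -/
def split (p q : ℝ × ℝ) (R : Sq) : QTree :=
  splitFuel (splitDepth p q R) p q R

/-- Insertion of a key `p` into a quadtree well-formed for the region `R`. -/
def qinsert (p : ℝ × ℝ) : QTree → Sq → QTree
  | .empty, _ => .leaf p
  | .leaf q, R => if q = p then .leaf p else split p q R
  | .internal a b c e, R =>
    match R.dirOf p with
    | .nw => .internal (qinsert p a (R.quad .nw)) b c e
    | .ne => .internal a (qinsert p b (R.quad .ne)) c e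
    | .sw => .internal a b (qinsert p c (R.quad .sw)) e
    | .se => .internal a b c (qinsert p e (R.quad .se))

/-- The subtree of `t` at a direction sequence (defined only when the path exists). -/
def subtreeAt : QTree → List Dir → Option QTree
  | t, [] => some t
  | .internal a b c e, d :: s =>
    match d with
    | .nw => subtreeAt a s
    | .ne => subtreeAt b s
    | .sw => subtreeAt c s
    | .se => subtreeAt e s
  | .empty, _ :: _ => none
  | .leaf _, _ :: _ => none

/-!
A quadtree built by insertions is determined by its set of keys: an internal node occurs exactly
where at least two keys share the region, and the keys of its children are sorted out by direction.
Hence two insertion sequences with the same keys build the same tree. The only geometric input is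
that two distinct points of a square are eventually routed apart, since regions shrink to diameter
zero.
-/

namespace Sq

variable {R : Sq} {p q : ℝ × ℝ}

theorem mem_quad_dirOf (hp : p ∈ R.set) : p ∈ (R.quad (R.dirOf p)).set := by
  obtain ⟨hx, hx', hy, hy'⟩ := hp
  unfold dirOf
  split_ifs <;> simp only [quad, set, Set.mem_ofPred_eq] <;>
    refine ⟨?_, ?_, ?_, ?_⟩ <;> linarith

theorem quad_w (R : Sq) (d : Dir) : (R.quad d).w = R.w / 2 := by
  cases d <;> rfl

theorem dist_lt_w (hp : p ∈ R.set) (hq : q ∈ R.set) : dist p q < R.w := by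
  obtain ⟨hpx, hpx', hpy, hpy'⟩ := hp
  obtain ⟨hqx, hqx', hqy, hqy'⟩ := hq
  rw [Prod.dist_eq, max_lt_iff, Real.dist_eq, Real.dist_eq, abs_lt, abs_lt]
  refine ⟨⟨?_, ?_⟩, ?_, ?_⟩ <;> linarith

end Sq

section Routing

variable {R : Sq} {p q : ℝ × ℝ}

theorem routeSq_succ_eq_routeSq_quad (R : Sq) (p : ℝ × ℝ) (n : ℕ) :
    routeSq R p (n + 1) = routeSq (R.quad (R.dirOf p)) p n := by
  induction n with
  | zero => rfl
  | succ n ih => rw [routeSq, ih, routeSq]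

theorem routeSq_w (R : Sq) (p : ℝ × ℝ) (n : ℕ) : (routeSq R p n).w = R.w / 2 ^ n := by
  induction n with
  | zero => simp [routeSq]
  | succ n ih => rw [routeSq, Sq.quad_w, ih, pow_succ, div_div]

theorem mem_routeSq_of_forall_dirOf_eq (hq : q ∈ R.set)
    (h : ∀ n, (routeSq R p n).dirOf p = (routeSq R p n).dirOf q) (n : ℕ) :
    q ∈ (routeSq R p n).set := by
  induction n with
  | zero => exact hq
  | succ n ih => rw [routeSq, h n]; exact Sq.mem_quad_dirOf ih

theorem exists_dirOf_routeSq_ne (hp : p ∈ R.set) (hq : q ∈ R.set) (hpq : p ≠ q) :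
    ∃ n, (routeSq R p n).dirOf p ≠ (routeSq R p n).dirOf q := by
  by_contra! h
  have hdist (n : ℕ) : dist p q < R.w / 2 ^ n := by
    rw [← routeSq_w R p n]
    exact Sq.dist_lt_w (mem_routeSq_of_forall_dirOf_eq hp (fun _ ↦ rfl) n)
      (mem_routeSq_of_forall_dirOf_eq hq h n)
  obtain ⟨n, hn⟩ := pow_unbounded_of_one_lt (R.w / dist p q) one_lt_two
  rw [div_lt_comm₀ (dist_pos.2 hpq) (by positivity)] at hn
  exact (hdist n).not_gt hn

end Routing

theorem qinsert_mkNode (p : ℝ × ℝ) (f : Dir → QTree) (R : Sq) :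
    qinsert p (mkNode f) R = mkNode (Function.update f (R.dirOf p)
      (qinsert p (f (R.dirOf p)) (R.quad (R.dirOf p)))) := by
  rw [mkNode, qinsert]
  cases R.dirOf p <;> simp [mkNode]

namespace QTree

/-- `t.Represents R S`: the tree `t` is well-formed for `R`, has key set `S`, and has no internal
node with fewer than two keys below it. The key set is an index, rather than computed by `keys`, so
that trees representing the same set can be compared by induction on the relation alone. -/
inductive Represents : QTree → Sq → Set (ℝ × ℝ) → Prop
  | empty {R : Sq} {S : Set (ℝ × ℝ)} (hS : S = ∅) : Represents .empty R S
  | leaf {p : ℝ × ℝ} {R : Sq} {S : Set (ℝ × ℝ)} (hp : p ∈ R.set) (hS : S = {p}) :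
      Represents (.leaf p) R S
  | node {f : Dir → QTree} {R : Sq} {S : Set (ℝ × ℝ)} (hS : S.Nontrivial)
      (hf : ∀ d, Represents (f d) (R.quad d) {p ∈ S | R.dirOf p = d}) :
      Represents (mkNode f) R S

variable {R : Sq} {S : Set (ℝ × ℝ)} {t t' : QTree} {p q : ℝ × ℝ}

theorem Represents.unique (ht : t.Represents R S) (ht' : t'.Represents R S) : t = t' := by
  induction ht generalizing t' with
  | empty hS =>
    subst hS
    cases ht' with
    | empty => rfl
    | leaf _ hS' => exact absurd hS'.symm (Set.singleton_ne_empty _)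
    | node hS' => exact absurd hS' Set.not_nontrivial_empty
  | leaf _ hS =>
    subst hS
    cases ht' with
    | empty hS' => exact absurd hS' (Set.singleton_ne_empty _)
    | leaf _ hS' => rw [Set.singleton_injective hS']
    | node hS' => exact absurd hS' Set.not_nontrivial_singleton
  | node hS _ ih =>
    cases ht' with
    | empty hS' => exact absurd (hS' ▸ hS) Set.not_nontrivial_empty
    | leaf _ hS' => exact absurd (hS' ▸ hS) Set.not_nontrivial_singleton
    | node _ hf' => exact congrArg mkNode (funext fun d ↦ ih d (hf' d))

theorem represents_mkNode_single (hS : S.Nontrivial) {d : Dir} (hd : ∀ s ∈ S, R.dirOf s = d)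
    (ht : t.Represents (R.quad d) S) :
    (mkNode fun e ↦ if e = d then t else .empty).Represents R S := by
  refine .node hS fun e ↦ ?_
  split_ifs with he
  · subst he
    rwa [Set.sep_eq_self_iff_mem_true.2 hd]
  · exact .empty (by grind)

theorem represents_mkNode_pair (hp : p ∈ R.set) (hq : q ∈ R.set) (hpq : R.dirOf p ≠ R.dirOf q) :
    (mkNode fun d ↦ if d = R.dirOf p then .leaf p
      else if d = R.dirOf q then .leaf q else .empty).Represents R {p, q} := by
  refine .node (Set.nontrivial_pair (ne_of_apply_ne R.dirOf hpq)) fun d ↦ ?_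
  split_ifs with hdp hdq
  · subst hdp
    exact .leaf (Sq.mem_quad_dirOf hp) (by grind)
  · subst hdq
    exact .leaf (Sq.mem_quad_dirOf hq) (by grind)
  · exact .empty (by grind)

theorem represents_splitFuel (hp : p ∈ R.set) (hq : q ∈ R.set) {n : ℕ}
    (hn : (routeSq R p n).dirOf p ≠ (routeSq R p n).dirOf q) :
    (splitFuel (n + 1) p q R).Represents R {p, q} := by
  induction n generalizing R with
  | zero =>
    rw [routeSq] at hn
    rw [splitFuel, if_neg hn]
    exact represents_mkNode_pair hp hq hn
  | succ n ih =>
    rw [splitFuel]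
    split_ifs with hd
    · have hpq : p ≠ q := ne_of_apply_ne _ hn
      rw [routeSq_succ_eq_routeSq_quad] at hn
      exact represents_mkNode_single (Set.nontrivial_pair hpq) (by simp [hd])
        (ih (Sq.mem_quad_dirOf hp) (hd ▸ Sq.mem_quad_dirOf hq) hn)
    · exact represents_mkNode_pair hp hq hd

theorem represents_split (hp : p ∈ R.set) (hq : q ∈ R.set) (hpq : p ≠ q) :
    (split p q R).Represents R {p, q} := by
  classical
  have h := exists_dirOf_routeSq_ne hp hq hpq
  rw [split, splitDepth, dif_pos h]
  exact represents_splitFuel hp hq (Nat.find_spec h)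

theorem represents_qinsert (ht : t.Represents R S) (hp : p ∈ R.set) :
    (qinsert p t R).Represents R (insert p S) := by
  induction ht with
  | empty hS => exact .leaf hp (by simp [hS])
  | @leaf q R S hq hS =>
    rw [qinsert, hS]
    split_ifs with hqp
    · exact .leaf hp (by simp [hqp])
    · exact represents_split hp hq (Ne.symm hqp)
  | @node f R S hS hf ih =>
    rw [qinsert_mkNode]
    refine .node (hS.mono (Set.subset_insert p S)) fun d ↦ ?_
    rcases eq_or_ne d (R.dirOf p) with rfl | hd
    · have hkeys : {s ∈ insert p S | R.dirOf s = R.dirOf p} =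
          insert p {s ∈ S | R.dirOf s = R.dirOf p} := by
        grind
      rw [Function.update_self, hkeys]
      exact ih _ (Sq.mem_quad_dirOf hp)
    · have hkeys : {s ∈ insert p S | R.dirOf s = d} = {s ∈ S | R.dirOf s = d} := by grind
      rw [Function.update_of_ne hd, hkeys]
      exact hf d

theorem represents_foldl_qinsert (ht : t.Represents R S) {l : List (ℝ × ℝ)}
    (hl : ∀ p ∈ l, p ∈ R.set) :
    (l.foldl (fun t p ↦ qinsert p t R) t).Represents R (S ∪ {p | p ∈ l}) := by
  induction l generalizing t S with
  | nil => simpa using ht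
  | cons p l ih =>
    rw [List.forall_mem_cons] at hl
    have hkeys : S ∪ {s | s ∈ p :: l} = insert p S ∪ {s | s ∈ l} := by grind
    rw [hkeys]
    exact ih (represents_qinsert ht hl.1) hl.2

end QTree

theorem insert_order_independent_general (R : Sq) (l₁ l₂ : List (ℝ × ℝ))
    (hmem : ∀ p ∈ l₁, p ∈ R.set) (h : ∀ p, p ∈ l₁ ↔ p ∈ l₂) :
    l₁.foldl (fun t p ↦ qinsert p t R) .empty = l₂.foldl (fun t p ↦ qinsert p t R) .empty := by
  have h₁ := QTree.represents_foldl_qinsert (.empty rfl) hmem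
  have h₂ := QTree.represents_foldl_qinsert (.empty rfl) fun p hp ↦ hmem p ((h p).2 hp)
  simp only [← h] at h₂
  exact h₁.unique h₂

/-- The shape of a region quadtree is independent of the order of insertions:
if `l₁` and `l₂` are duplicate-free lists of points of a half-open square `R` of side `w > 0`
such that `l₂` is a permutation of `l₁`, then folding `insert` over `l₁` starting from `empty`
yields the same tree as folding `insert` over `l₂` starting from `empty`. -/
theorem insert_order_independent (R : Sq) (hw : 0 < R.w)
    (l₁ l₂ : List (ℝ × ℝ)) (hmem : ∀ p ∈ l₁, p ∈ R.set)
    (h₁ : l₁.Nodup) (h₂ : l₂.Nodup) (hperm : l₂.Perm l₁) :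
    l₁.foldl (fun t p => qinsert p t R) .empty =
      l₂.foldl (fun t p => qinsert p t R) .empty :=
  insert_order_independent_general R l₁ l₂ hmem fun _ ↦ hperm.mem_iff.symm
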